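/- arXiv:1103.3938 — 4 statements merged into one kernel-verified Lean document; each statement's English description precedes it below -/
import Mathlib

section
/- For n ≥ 3 let q_n = ((−1)^{n+1} + 2ⁿ)/3, let g_n be the number of ordered pairs (A,B) of disjoint subsets of [n] with ∑_{i∈B} 2^i − ∑_{i∈A} 2^i = q_n + 1, and let h_n be the number of ordered pairs (A,B) of disjoint subsets of [n] with ∑_{i∈B} 2^i − ∑_{i∈A} 2^i = q_n − 1. Then for odd n ≥ 3 one has (g_n, h_n) = (F_n, F_{n+1}), and for even n ≥ 4 one has (g_n, h_n) = (F_{n+1}, F_n), where F is the Fibonacci sequence with F₁ = F₂ = 1. In particular g_n + h_n = F_{n+2} for all n ≥ 3. -/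
open Finset

/-- The strict part of a (total antisymmetric) order on subsets. -/
def cpLT {n : ℕ} (le : Finset (Fin n) → Finset (Fin n) → Prop)
    (A B : Finset (Fin n)) : Prop :=
  le A B ∧ A ≠ B

/-- `le` is a comparative probability order on `[n]`: a linear (total,
antisymmetric, transitive) order on the powerset of `[n]` with `∅ ≺ A` for
nonempty `A`, satisfying de Finetti's axiom. -/
def IsCPO {n : ℕ} (le : Finset (Fin n) → Finset (Fin n) → Prop) : Prop :=
  (∀ A B, le A B ∨ le B A) ∧
  (∀ A B, le A B → le B A → A = B) ∧
  (∀ A B C, le A B → le B C → le A C) ∧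
  (∀ A : Finset (Fin n), A ≠ ∅ → cpLT le ∅ A) ∧
  (∀ A B C : Finset (Fin n), Disjoint (A ∪ B) C → (le A B ↔ le (A ∪ C) (B ∪ C)))

/-- `(A,B)` is a critical pair: disjoint, `A ≺ B`, and no `C` with `A ≺ C ≺ B`. -/
def Critical {n : ℕ} (le : Finset (Fin n) → Finset (Fin n) → Prop)
    (A B : Finset (Fin n)) : Prop :=
  Disjoint A B ∧ cpLT le A B ∧ ¬ ∃ C, cpLT le A C ∧ cpLT le C B

/-- `(A,B)` is a flippable pair: critical, and for every `D` disjoint from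
`A ∪ B` the pair `(A ∪ D, B ∪ D)` is adjacent. -/
def Flippable {n : ℕ} (le : Finset (Fin n) → Finset (Fin n) → Prop)
    (A B : Finset (Fin n)) : Prop :=
  Critical le A B ∧
  ∀ D : Finset (Fin n), Disjoint D (A ∪ B) →
    ¬ ∃ C, cpLT le (A ∪ D) C ∧ cpLT le C (B ∪ D)

/-- The set of flippable pairs of an order. -/
def FlippablePairs {n : ℕ} (le : Finset (Fin n) → Finset (Fin n) → Prop) :
    Set (Finset (Fin n) × Finset (Fin n)) :=
  {p | Flippable le p.1 p.2}

/-- `le` is (additively) representable by a positive utility vector. -/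
def Representable {n : ℕ} (le : Finset (Fin n) → Finset (Fin n) → Prop) : Prop :=
  ∃ u : Fin n → ℝ, (∀ i, 0 < u i) ∧
    ∀ A B : Finset (Fin n), le A B ↔ ∑ i ∈ A, u i ≤ ∑ i ∈ B, u i

/-- `(X, Y) = (A ∪ D, B ∪ D)` for some `D` disjoint from `A ∪ B`. -/
def FlipRel {n : ℕ} (A B X Y : Finset (Fin n)) : Prop :=
  ∃ D : Finset (Fin n), Disjoint D (A ∪ B) ∧ X = A ∪ D ∧ Y = B ∪ D

/-- The relation obtained from `le` by flipping over the pair `(A,B)`: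
all comparisons between `A ∪ D` and `B ∪ D` (for `D` disjoint from `A ∪ B`)
are reversed, all other comparisons are kept. -/
def flipOrder {n : ℕ} (le : Finset (Fin n) → Finset (Fin n) → Prop)
    (A B : Finset (Fin n)) : Finset (Fin n) → Finset (Fin n) → Prop :=
  fun X Y => (le X Y ∧ ¬ FlipRel A B X Y) ∨ FlipRel A B Y X

/-- Utility (sum of weights) of a subset. -/
def usum {k : ℕ} (m : Fin k → ℕ) (A : Finset (Fin k)) : ℕ := ∑ i ∈ A, m i

/-- The order on subsets induced by a utility vector. -/
def uord {k : ℕ} (m : Fin k → ℕ) : Finset (Fin k) → Finset (Fin k) → Prop :=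
  fun A B => usum m A ≤ usum m B

/-- `qn n = ((−1)^(n+1) + 2^n) / 3` as a natural number. -/
def qn (n : ℕ) : ℕ := if n % 2 = 1 then (2 ^ n + 1) / 3 else (2 ^ n - 1) / 3

/-- The utility vector `m` on `[n+1]` (element `k` corresponds to index `k-1`):
`m_k = 2^k` for `1 ≤ k ≤ n−2`, `m_{n−1} = qn n`, `m_n = 2^(n−1)`, `m_{n+1} = 2^n`. -/
def mvec (n : ℕ) : Fin (n + 1) → ℕ := fun i =>
  if (i : ℕ) + 1 ≤ n - 2 then 2 ^ ((i : ℕ) + 1)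
  else if (i : ℕ) + 1 = n - 1 then qn n
  else if (i : ℕ) + 1 = n then 2 ^ (n - 1)
  else 2 ^ n

/-- Ordered pairs `(A,B)` of disjoint subsets of `[n]` (element `k` has utility
`2^k`, i.e. index `i` has utility `2^(i+1)`) with utility difference `d`. -/
def diffPairs (n : ℕ) (d : ℕ) : Set (Finset (Fin n) × Finset (Fin n)) :=
  {p | Disjoint p.1 p.2 ∧
    ∑ i ∈ p.2, 2 ^ ((i : ℕ) + 1) = (∑ i ∈ p.1, 2 ^ ((i : ℕ) + 1)) + d}

/-- `g n`: the number of disjoint pairs with utility difference `qn n + 1`. -/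
noncomputable def gfun (n : ℕ) : ℕ := (diffPairs n (qn n + 1)).ncard

/-- `h n`: the number of disjoint pairs with utility difference `qn n − 1`. -/
noncomputable def hfun (n : ℕ) : ℕ := (diffPairs n (qn n - 1)).ncard

/-!
Disjoint pairs with utility difference `2 * d` are the representations of `d` with `n` binary digits
in `{-1, 0, 1}`. The last digit of an even number is `0`, so removing it halves the number; an odd
number is uniquely `a + b` with `|a - b| = 1`, and removing its last digit leaves `a` or `b`.
Since `qn (n + 2) = qn (n + 1) + 2 * qn n`, with summands that differ by one, the number of
representations of `qn n` with `n + 1` digits satisfies the Fibonacci recurrence. Finally,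
`qn (n + 2) ± 1` are `2 * qn (n + 1)` and `4 * qn n`, in an order given by the parity of `n`.
-/

/-- The integer with binary digits `f i ∈ {-1, 0, 1}`, least significant digit first. -/
def signedBinaryValue {n : ℕ} (f : Fin n → SignType) : ℤ :=
  ∑ i, (f i : ℤ) * 2 ^ (i : ℕ)

/-- The signed-digit binary representations of `d` with `n` digits; leading zeros are allowed. -/
def signedBinaryReps (n : ℕ) (d : ℤ) : Finset (Fin n → SignType) :=
  {f | signedBinaryValue f = d}

theorem signedBinaryValue_cons {n : ℕ} (s : SignType) (f : Fin n → SignType) :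
    signedBinaryValue (Fin.cons s f : Fin (n + 1) → SignType) = s + 2 * signedBinaryValue f := by
  simp only [signedBinaryValue, Fin.sum_univ_succ, Fin.cons_zero, Fin.cons_succ, Fin.val_zero,
    Fin.val_succ, pow_zero, mul_one, mul_sum, pow_succ', mul_left_comm]

theorem card_signedBinaryReps_succ (n : ℕ) (d : ℤ) :
    #(signedBinaryReps (n + 1) d) =
      #{f : Fin n → SignType | 2 * signedBinaryValue f = d} +
        (#{f : Fin n → SignType | -1 + 2 * signedBinaryValue f = d} +
          #{f : Fin n → SignType | 1 + 2 * signedBinaryValue f = d}) := by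
  have sum_digit : #(signedBinaryReps (n + 1) d) =
      ∑ s : SignType, #{f : Fin n → SignType | s + 2 * signedBinaryValue f = d} := by
    simp only [signedBinaryReps, card_filter]
    rw [← (Fin.consEquiv fun _ => SignType).sum_comp, Fintype.sum_prod_type]
    simp only [Fin.consEquiv, Equiv.coe_fn_mk, signedBinaryValue_cons]
  rw [sum_digit, SignType.univ_eq, sum_insert (by decide), sum_pair (by decide)]
  simp only [SignType.coe_zero, SignType.coe_neg_one, SignType.coe_one, zero_add]
  rfl

theorem card_signedBinaryReps_two_mul (n : ℕ) (d : ℤ) :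
    #(signedBinaryReps (n + 1) (2 * d)) = #(signedBinaryReps n d) := by
  have zero_iff (v : ℤ) : 2 * v = 2 * d ↔ v = d := by omega
  have neg_one_ne (v : ℤ) : -1 + 2 * v ≠ 2 * d := by omega
  have one_ne (v : ℤ) : 1 + 2 * v ≠ 2 * d := by omega
  rw [card_signedBinaryReps_succ]
  simp only [signedBinaryReps, zero_iff, neg_one_ne, one_ne,
    filter_false, card_empty, add_zero]

theorem card_signedBinaryReps_two_mul_add_one (n : ℕ) (d : ℤ) :
    #(signedBinaryReps (n + 1) (2 * d + 1)) =
      #(signedBinaryReps n d) + #(signedBinaryReps n (d + 1)) := by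
  have zero_ne (v : ℤ) : 2 * v ≠ 2 * d + 1 := by omega
  have neg_one_iff (v : ℤ) : -1 + 2 * v = 2 * d + 1 ↔ v = d + 1 := by omega
  have one_iff (v : ℤ) : 1 + 2 * v = 2 * d + 1 ↔ v = d := by omega
  rw [card_signedBinaryReps_succ]
  simp only [signedBinaryReps, zero_ne, neg_one_iff, one_iff,
    filter_false, card_empty, zero_add]
  exact add_comm _ _

theorem card_signedBinaryReps_add (n : ℕ) {a b : ℤ} (hab : |a - b| = 1) :
    #(signedBinaryReps (n + 1) (a + b)) =
      #(signedBinaryReps n a) + #(signedBinaryReps n b) := by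
  rcases (abs_eq zero_le_one).1 hab with h | h
  · obtain rfl : a = b + 1 := by omega
    rw [show b + 1 + b = 2 * b + 1 by ring, card_signedBinaryReps_two_mul_add_one, add_comm]
  · obtain rfl : b = a + 1 := by omega
    rw [show a + (a + 1) = 2 * a + 1 by ring, card_signedBinaryReps_two_mul_add_one]

section SignSupports

variable {α : Type*} [Fintype α]

/-- The disjoint sets `(A, B)` on which a sign pattern takes the values `-1` and `1`: the dictionary
between signed digits and the pairs counted by `diffPairs`. -/
def signSupports (f : α → SignType) : Finset α × Finset α :=
  (univ.filter (f · = -1), univ.filter (f · = 1))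

theorem signSupports_injective : Function.Injective (signSupports (α := α)) := by
  intro f g h
  funext i
  have hneg : f i = -1 ↔ g i = -1 := by simpa [signSupports] using congrArg (i ∈ ·.1) h
  have hpos : f i = 1 ↔ g i = 1 := by simpa [signSupports] using congrArg (i ∈ ·.2) h
  generalize f i = s, g i = t at hneg hpos
  decide +revert

theorem range_signSupports : Set.range (signSupports (α := α)) = {p | Disjoint p.1 p.2} := by
  classical
  ext ⟨A, B⟩
  constructor
  · rintro ⟨f, hf⟩
    obtain ⟨rfl, rfl⟩ := Prod.mk.inj hf
    exact disjoint_filter.2 fun i _ hneg hpos => by simp [hneg] at hpos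
  · intro hAB
    have notMem_of_mem {i} : i ∈ B → i ∉ A := fun hB hA => disjoint_left.1 hAB hA hB
    refine ⟨fun i => if i ∈ A then -1 else if i ∈ B then 1 else 0, ?_⟩
    ext i <;> by_cases hA : i ∈ A <;> by_cases hB : i ∈ B <;> simp_all [signSupports]

theorem sum_signSupports_snd_sub_sum_signSupports_fst {R : Type*} [Ring R] (f : α → SignType)
    (w : α → R) :
    ∑ i ∈ (signSupports f).2, w i - ∑ i ∈ (signSupports f).1, w i = ∑ i, f i * w i := by
  simp only [signSupports, sum_filter, ← sum_sub_distrib]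
  refine sum_congr rfl fun i _ => ?_
  cases f i <;> simp

end SignSupports

theorem signSupports_mem_diffPairs_two_mul_iff {n d : ℕ} {f : Fin n → SignType} :
    signSupports f ∈ diffPairs n (2 * d) ↔ f ∈ signedBinaryReps n d := by
  have hdisj : Disjoint (signSupports f).1 (signSupports f).2 :=
    range_signSupports.subset ⟨f, rfl⟩
  have hsum : ∑ i ∈ (signSupports f).2, (2 : ℤ) ^ ((i : ℕ) + 1) -
      ∑ i ∈ (signSupports f).1, (2 : ℤ) ^ ((i : ℕ) + 1) = 2 * signedBinaryValue f := by
    rw [sum_signSupports_snd_sub_sum_signSupports_fst, signedBinaryValue, mul_sum]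
    exact sum_congr rfl fun i _ => by ring
  simp only [diffPairs, signedBinaryReps, Set.mem_ofPred_eq, hdisj, true_and, mem_filter_univ]
  zify
  omega

theorem ncard_diffPairs_two_mul (n d : ℕ) :
    (diffPairs n (2 * d)).ncard = #(signedBinaryReps n d) := by
  have hrange : diffPairs n (2 * d) ⊆ Set.range signSupports :=
    fun p hp => range_signSupports.superset hp.1
  rw [← Set.ncard_preimage_of_injective_subset_range signSupports_injective hrange,
    ← Set.ncard_coe_finset]
  congr 1
  ext f
  exact signSupports_mem_diffPairs_two_mul_iff

theorem three_mul_qn (n : ℕ) : 3 * (qn n : ℤ) = 2 ^ n - (-1) ^ n := by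
  obtain ⟨k, hk⟩ := n.even_or_odd'
  have two_pow_mod : 2 ^ (2 * k) % 3 = 1 := by simp [pow_mul, Nat.pow_mod]
  rcases hk with rfl | rfl
  · have hq : 3 * qn (2 * k) + 1 = 2 ^ (2 * k) := by
      rw [qn, if_neg (by omega)]
      lia
    rw [(even_two_mul k).neg_one_pow, eq_sub_iff_add_eq]
    exact_mod_cast hq
  · have hq : 3 * qn (2 * k + 1) = 2 ^ (2 * k) * 2 + 1 := by
      rw [qn, if_pos (by omega), pow_succ]
      omega
    rw [(odd_two_mul_add_one k).neg_one_pow, pow_succ, sub_neg_eq_add]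
    exact_mod_cast hq

theorem qn_succ (n : ℕ) : (qn (n + 1) : ℤ) = 2 * qn n + (-1) ^ n := by
  have h := three_mul_qn n
  have h' := three_mul_qn (n + 1)
  rw [pow_succ, pow_succ] at h'
  linarith

theorem qn_add_two (n : ℕ) : qn (n + 2) = qn (n + 1) + 2 * qn n := by
  have h := qn_succ n
  have h' : (qn (n + 2) : ℤ) = 2 * qn (n + 1) + (-1) ^ (n + 1) := qn_succ (n + 1)
  rw [pow_succ] at h'
  omega

theorem card_signedBinaryReps_qn (n : ℕ) :
    #(signedBinaryReps (n + 1) (qn n)) = Nat.fib (n + 2) := by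
  induction n using Nat.twoStepInduction with
  | zero => decide
  | one => decide
  | more n ih ih' =>
    have hdist : |(qn (n + 1) : ℤ) - (2 * qn n : ℤ)| = 1 := by simp [qn_succ]
    rw [qn_add_two, Nat.cast_add, Nat.cast_mul, Nat.cast_ofNat, card_signedBinaryReps_add _ hdist,
      card_signedBinaryReps_two_mul, ih, ih', Nat.fib_add_two (n := n + 2), add_comm]

theorem ncard_diffPairs_two_mul_qn (n : ℕ) :
    (diffPairs (n + 1) (2 * qn n)).ncard = Nat.fib (n + 2) := by
  rw [ncard_diffPairs_two_mul, card_signedBinaryReps_qn]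

theorem ncard_diffPairs_four_mul_qn (n : ℕ) :
    (diffPairs (n + 2) (4 * qn n)).ncard = Nat.fib (n + 2) := by
  rw [show 4 * qn n = 2 * (2 * qn n) by ring, ncard_diffPairs_two_mul, Nat.cast_mul,
    Nat.cast_ofNat, card_signedBinaryReps_two_mul, card_signedBinaryReps_qn]

theorem gfun_hfun_add_two_of_even {n : ℕ} (hn : Even n) :
    gfun (n + 2) = Nat.fib (n + 3) ∧ hfun (n + 2) = Nat.fib (n + 2) := by
  have h := qn_succ n
  have h' := qn_add_two n
  rw [hn.neg_one_pow] at h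
  rw [gfun, hfun, show qn (n + 2) + 1 = 2 * qn (n + 1) by omega,
    show qn (n + 2) - 1 = 4 * qn n by omega]
  exact ⟨ncard_diffPairs_two_mul_qn (n + 1), ncard_diffPairs_four_mul_qn n⟩

theorem gfun_hfun_add_two_of_odd {n : ℕ} (hn : Odd n) :
    gfun (n + 2) = Nat.fib (n + 2) ∧ hfun (n + 2) = Nat.fib (n + 3) := by
  have h := qn_succ n
  have h' := qn_add_two n
  rw [hn.neg_one_pow] at h
  rw [gfun, hfun, show qn (n + 2) + 1 = 4 * qn n by omega,
    show qn (n + 2) - 1 = 2 * qn (n + 1) by omega]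
  exact ⟨ncard_diffPairs_four_mul_qn n, ncard_diffPairs_two_mul_qn (n + 1)⟩

/-- For odd `n ≥ 3`, `(g_n, h_n) = (F_n, F_{n+1})`; for even `n ≥ 4`,
`(g_n, h_n) = (F_{n+1}, F_n)`; in particular `g_n + h_n = F_{n+2}` for `n ≥ 3`. -/
theorem stmt11 (n : ℕ) :
    (3 ≤ n → Odd n → gfun n = Nat.fib n ∧ hfun n = Nat.fib (n + 1)) ∧
    (4 ≤ n → Even n → gfun n = Nat.fib (n + 1) ∧ hfun n = Nat.fib n) ∧
    (3 ≤ n → gfun n + hfun n = Nat.fib (n + 2)) := by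
  match n with
  | 0 | 1 => simp
  | m + 2 =>
    have parity_iff : (Odd (m + 2) ↔ Odd m) ∧ (Even (m + 2) ↔ Even m) := by
      constructor <;> simp [parity_simps]
    rw [parity_iff.1, parity_iff.2]
    refine ⟨fun _ hodd => gfun_hfun_add_two_of_odd hodd,
      fun _ heven => gfun_hfun_add_two_of_even heven, fun _ => ?_⟩
    rw [Nat.fib_add_two (n := m + 2)]
    rcases m.even_or_odd with heven | hodd
    · obtain ⟨hg, hh⟩ := gfun_hfun_add_two_of_even heven
      rw [hg, hh, add_comm]
    · obtain ⟨hg, hh⟩ := gfun_hfun_add_two_of_odd hodd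
      rw [hg, hh]
end

section
/- Let ≼ be a comparative probability order on [n] and let (A,B) and (E,F) be flippable pairs of ≼ with A∪B = E∪F. Then A = E and B = F. -/
open Finset

/-!
Suppose `a`, `b` and `e`, `f` are two ways of splitting the same element `u`. Passing to the
complement in `u` swaps the differences, `a \ e = f \ b` and `e \ a = b \ f`, and de Finetti's axiom
compares two elements by their differences; so `a ≼ e` is equivalent to `f ≼ b`. If moreover
`e ≺ f`, then `a ≼ e ≺ f ≼ b`, and a critical pair `(a, b)` leaves no room for this unless `a = e`.
-/

section DeFinetti

variable {α : Type*} [GeneralizedBooleanAlgebra α] {r : α → α → Prop} {a b e f : α}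

/-- De Finetti's axiom for a relation `r` on events: a comparison is unaffected by joining an event
disjoint from both sides. Events form a generalized Boolean algebra, whose own order `≤` is
inclusion and is unrelated to `r`. -/
def DeFinettiAxiom (r : α → α → Prop) : Prop :=
  ∀ ⦃a b c : α⦄, Disjoint (a ⊔ b) c → (r a b ↔ r (a ⊔ c) (b ⊔ c))

/-- `(a, b)` is a critical pair for the non-strict relation `r`: disjoint and consecutive, `a` being
the smaller. This is `Critical` for an arbitrary algebra of events, with the absence of an event
strictly between `a` and `b` phrased positively. -/
structure IsCriticalPair (r : α → α → Prop) (a b : α) : Prop where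
  disjoint : Disjoint a b
  rel : r a b
  ne : a ≠ b
  eq_or_eq : ∀ ⦃c : α⦄, r a c → r c b → c = a ∨ c = b

theorem sdiff_eq_sdiff_of_sup_eq_sup (hab : Disjoint a b) (hef : Disjoint e f)
    (h : a ⊔ b = e ⊔ f) : a \ e = f \ b :=
  calc
    a \ e = ((a ⊔ b) \ b) \ e := by rw [hab.sup_sdiff_cancel_right]
    _ = ((e ⊔ f) \ e) \ b := by rw [h, sdiff_sdiff_comm]
    _ = f \ b := by rw [hef.sup_sdiff_cancel_left]

namespace DeFinettiAxiom

theorem rel_sdiff_sdiff_iff (hr : DeFinettiAxiom r) : r (a \ b) (b \ a) ↔ r a b := by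
  have hdisj : Disjoint (a \ b ⊔ b \ a) (a ⊓ b) :=
    disjoint_sup_left.mpr ⟨disjoint_inf_sdiff.symm, inf_comm a b ▸ disjoint_inf_sdiff.symm⟩
  have hb : b \ a ⊔ a ⊓ b = b := by rw [inf_comm, sup_comm, sup_inf_sdiff]
  rw [hr hdisj, sup_comm (a \ b), sup_inf_sdiff, hb]

theorem rel_iff_rel_of_sup_eq_sup (hr : DeFinettiAxiom r) (hab : Disjoint a b)
    (hef : Disjoint e f) (h : a ⊔ b = e ⊔ f) : r a e ↔ r f b :=
  calc
    r a e ↔ r (a \ e) (e \ a) := hr.rel_sdiff_sdiff_iff.symm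
    _ ↔ r (f \ b) (b \ f) := by
      rw [sdiff_eq_sdiff_of_sup_eq_sup hab hef h, sdiff_eq_sdiff_of_sup_eq_sup hef hab h.symm]
    _ ↔ r f b := hr.rel_sdiff_sdiff_iff

end DeFinettiAxiom

theorem IsCriticalPair.left_eq_left_of_rel [IsTrans α r] [Std.Antisymm r]
    (hab : IsCriticalPair r a b) (hef : IsCriticalPair r e f) (hr : DeFinettiAxiom r)
    (h : a ⊔ b = e ⊔ f) (hae : r a e) : a = e := by
  have hfb : r f b := (hr.rel_iff_rel_of_sup_eq_sup hab.disjoint hef.disjoint h).mp hae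
  have heb : r e b := _root_.trans hef.rel hfb
  rcases hab.eq_or_eq hae heb with hea | rfl
  · exact hea.symm
  · exact absurd (antisymm hef.rel hfb) hef.ne

theorem stmt13_general [IsLinearOrder α r] (hr : DeFinettiAxiom r)
    (hab : IsCriticalPair r a b) (hef : IsCriticalPair r e f) (h : a ⊔ b = e ⊔ f) :
    a = e ∧ b = f := by
  have hae : a = e := by
    rcases total_of r a e with hae | hea
    · exact hab.left_eq_left_of_rel hef hr h hae
    · exact (hef.left_eq_left_of_rel hab hr h.symm hea).symm
  subst hae
  exact ⟨rfl, by rw [← hab.disjoint.sup_sdiff_cancel_left, h, hef.disjoint.sup_sdiff_cancel_left]⟩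

end DeFinetti

section FiniteEvents

variable {n : ℕ} {le : Finset (Fin n) → Finset (Fin n) → Prop} {A B : Finset (Fin n)}

theorem IsCPO.isLinearOrder (h : IsCPO le) : IsLinearOrder (Finset (Fin n)) le where
  refl A := (h.1 A A).elim id id
  trans := h.2.2.1
  antisymm := h.2.1
  total := h.1

theorem IsCPO.deFinettiAxiom (h : IsCPO le) : DeFinettiAxiom le :=
  h.2.2.2.2

theorem Critical.isCriticalPair (h : Critical le A B) : IsCriticalPair le A B where
  disjoint := h.1
  rel := h.2.1.1
  ne := h.2.1.2
  eq_or_eq C hAC hCB := by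
    by_contra! hC
    exact h.2.2 ⟨C, ⟨hAC, hC.1.symm⟩, hCB, hC.2⟩

end FiniteEvents

/-- Two flippable pairs with the same union coincide. -/
theorem stmt13 {n : ℕ} (le : Finset (Fin n) → Finset (Fin n) → Prop) (h : IsCPO le)
    (A B E F : Finset (Fin n)) (hAB : Flippable le A B) (hEF : Flippable le E F)
    (hU : A ∪ B = E ∪ F) : A = E ∧ B = F := by
  have := h.isLinearOrder
  exact stmt13_general h.deFinettiAxiom hAB.1.isCriticalPair hEF.1.isCriticalPair hU
end

section
/- Let H(x) = −x·log₂ x − (1−x)·log₂(1−x) be the binary entropy function, and let λ ∈ (0, 1/2) be the solution of λ + H(λ) = 1. Then for every c with λ < c < 1/2 there exists N such that for all n ≥ N, every comparative probability order on [n] has at most 2^{H(c)·n} flippable pairs. -/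
open Finset

/-- The binary entropy function `H(x) = −x log₂ x − (1−x) log₂ (1−x)`. -/
noncomputable def Hb (x : ℝ) : ℝ := -x * Real.logb 2 x - (1 - x) * Real.logb 2 (1 - x)

/-!
Two injections bound the number of flippable pairs. Complementation inside `U` reverses the order
on the subsets of `U`, so a critical pair `(A, B)` with `A ∪ B = U` sits in the middle of that order
and is determined by `U`. On the other hand a flippable pair `(A, B)` produces the adjacent pairs
`(A ∪ D, B ∪ D)`, one for each of the `2 ^ #(A ∪ B)ᶜ` sets `D` disjoint from `A ∪ B`; an adjacent
pair is determined by its lower member, and `A`, `B` and `D` can be read off from it, so altogether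
at most `2 ^ n` adjacent pairs arise.
By the first injection and the entropy bound on the volume of a Hamming ball, at most
`2 ^ (H(λ) n)` flippable pairs have `#(A ∪ B)ᶜ ≤ λ n`; by the second, at most
`2 ^ (n - λ n) = 2 ^ (H(λ) n)` have `#(A ∪ B)ᶜ > λ n`.
-/

/-- Linear orders on the finite subsets of `α` satisfying de Finetti's axiom: comparative
probability orders without the requirement that `∅` be the least element. -/
structure IsDeFinettiOrder {α : Type*} [DecidableEq α] (le : Finset α → Finset α → Prop) : Prop
    extends IsLinearOrder (Finset α) le where
  union_right_iff : ∀ A B C, Disjoint (A ∪ B) C → (le A B ↔ le (A ∪ C) (B ∪ C))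

theorem IsCPO.isDeFinettiOrder {n : ℕ} {le : Finset (Fin n) → Finset (Fin n) → Prop}
    (h : IsCPO le) : IsDeFinettiOrder le where
  refl A := (h.1 A A).elim id id
  trans := h.2.2.1
  antisymm := h.2.1
  total := h.1
  union_right_iff := h.2.2.2.2

namespace IsDeFinettiOrder

variable {α : Type*} [DecidableEq α] {le : Finset α → Finset α → Prop} {A B U : Finset α}

theorem sdiff_sdiff_iff (h : IsDeFinettiOrder le) : le (A \ B) (B \ A) ↔ le A B := by
  have hdisj : Disjoint (A \ B ∪ B \ A) (A ∩ B) := by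
    rw [disjoint_left]
    grind
  rw [h.union_right_iff _ _ _ hdisj, sdiff_union_inter, inter_comm, sdiff_union_inter]

theorem relCompl_iff (h : IsDeFinettiOrder le) (hA : A ⊆ U) (hB : B ⊆ U) :
    le (U \ B) (U \ A) ↔ le A B := by
  rw [← h.sdiff_sdiff_iff, sdiff_sdiff_sdiff_cancel_left hA, sdiff_sdiff_sdiff_cancel_left hB,
    h.sdiff_sdiff_iff]

end IsDeFinettiOrder

section Pairs

variable {n : ℕ} {le : Finset (Fin n) → Finset (Fin n) → Prop} {A B D A' B' D' : Finset (Fin n)}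

theorem IsDeFinettiOrder.le_of_not_cpLT (h : IsDeFinettiOrder le) (hAB : ¬ cpLT le A B) :
    le B A := by
  rcases h.total A B with hle | hle
  · obtain rfl : A = B := not_not.1 fun hne => hAB ⟨hle, hne⟩
    exact hle
  · exact hle

/-- `B` is the immediate successor of `A`; `(A, B)` is critical when moreover `A` and `B` are
disjoint. -/
def Adjacent (le : Finset (Fin n) → Finset (Fin n) → Prop) (A B : Finset (Fin n)) : Prop :=
  cpLT le A B ∧ ¬ ∃ C, cpLT le A C ∧ cpLT le C B

theorem Adjacent.le_of_cpLT (h : IsDeFinettiOrder le) (hAB : Adjacent le A B)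
    (hAD : cpLT le A D) : le B D :=
  h.le_of_not_cpLT fun hDB => hAB.2 ⟨D, hAD, hDB⟩

theorem Adjacent.right_unique (h : IsDeFinettiOrder le) (hAB : Adjacent le A B)
    (hAB' : Adjacent le A B') : B = B' :=
  h.antisymm _ _ (hAB.le_of_cpLT h hAB'.1) (hAB'.le_of_cpLT h hAB.1)

theorem Critical.left_eq_of_le (h : IsDeFinettiOrder le) (hAB : Critical le A B)
    (hAB' : Critical le A' B') (hU : A ∪ B = A' ∪ B') (hle : le A A') : A = A' := by
  by_contra hne
  have hB'B : le B' B := by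
    have hcompl := (h.relCompl_iff subset_union_left (hU.symm ▸ subset_union_left)).2 hle
    rwa [union_sdiff_cancel_left hAB.1, hU, union_sdiff_cancel_left hAB'.1] at hcompl
  have hBA' : le B A' := Adjacent.le_of_cpLT h hAB.2 ⟨hle, hne⟩
  exact hAB'.2.1.2 (h.antisymm _ _ hAB'.2.1.1 (h.trans _ _ _ hB'B hBA'))

theorem injOn_union_critical (h : IsDeFinettiOrder le) :
    Set.InjOn (fun p : Finset (Fin n) × Finset (Fin n) => p.1 ∪ p.2)
      {p | Critical le p.1 p.2} := by
  rintro ⟨A, B⟩ hAB ⟨A', B'⟩ hAB' hU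
  obtain rfl : A = A' := (h.total A A').elim (hAB.left_eq_of_le h hAB' hU)
    fun hle => (hAB'.left_eq_of_le h hAB hU.symm hle).symm
  exact congrArg (A, ·) (Adjacent.right_unique h hAB.2 hAB'.2)

theorem Flippable.adjacent_union (h : IsDeFinettiOrder le) (hAB : Flippable le A B)
    (hD : Disjoint D (A ∪ B)) : Adjacent le (A ∪ D) (B ∪ D) := by
  obtain ⟨⟨-, ⟨hle, hne⟩, -⟩, hadj⟩ := hAB
  refine ⟨⟨(h.union_right_iff A B D hD.symm).1 hle, fun heq => hne ?_⟩, hadj D hD⟩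
  rw [disjoint_union_right] at hD
  rw [← union_sdiff_cancel_right hD.1.symm, heq, union_sdiff_cancel_right hD.2.symm]

theorem Flippable.eq_of_union_eq (h : IsDeFinettiOrder le) (hAB : Flippable le A B)
    (hAB' : Flippable le A' B') (hD : Disjoint D (A ∪ B)) (hD' : Disjoint D' (A' ∪ B'))
    (hA : A ∪ D = A' ∪ D') : A = A' ∧ B = B' ∧ D = D' := by
  have hB : B ∪ D = B' ∪ D' :=
    (hAB.adjacent_union h hD).right_unique h (hA ▸ hAB'.adjacent_union h hD')
  obtain rfl : D = D' := by
    have hinter : (A ∪ D) ∩ (B ∪ D) = (A' ∪ D') ∩ (B' ∪ D') := by rw [hA, hB]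
    rwa [← inter_union_distrib_right, ← inter_union_distrib_right,
      disjoint_iff_inter_eq_empty.1 hAB.1.1, disjoint_iff_inter_eq_empty.1 hAB'.1.1,
      empty_union, empty_union] at hinter
  rw [disjoint_union_right] at hD hD'
  refine ⟨?_, ?_, rfl⟩
  · rw [← union_sdiff_cancel_right hD.1.symm, hA, union_sdiff_cancel_right hD'.1.symm]
  · rw [← union_sdiff_cancel_right hD.2.symm, hB, union_sdiff_cancel_right hD'.2.symm]

theorem sum_two_pow_card_compl_le (h : IsDeFinettiOrder le)
    {F : Finset (Finset (Fin n) × Finset (Fin n))} (hF : ∀ p ∈ F, Flippable le p.1 p.2) :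
    ∑ p ∈ F, 2 ^ #(p.1 ∪ p.2)ᶜ ≤ 2 ^ n := by
  have hinj : Set.InjOn
      (fun q : (_ : Finset (Fin n) × Finset (Fin n)) × Finset (Fin n) => q.1.1 ∪ q.2)
      (F.sigma fun p => (p.1 ∪ p.2)ᶜ.powerset) := by
    rintro ⟨⟨A, B⟩, D⟩ hq ⟨⟨A', B'⟩, D'⟩ hq' hA
    simp only [coe_sigma, Set.mem_sigma_iff, mem_coe, mem_powerset,
      le_compl_iff_disjoint_right] at hq hq'
    obtain ⟨rfl, rfl, rfl⟩ := (hF _ hq.1).eq_of_union_eq h (hF _ hq'.1) hq.2 hq'.2 hA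
    rfl
  simpa only [card_sigma, card_powerset, card_univ, Fintype.card_finset, Fintype.card_fin]
    using card_le_card_of_injOn _ (fun _ _ => mem_univ _) hinj

theorem card_mul_two_rpow_le_of_le_card_compl (h : IsDeFinettiOrder le)
    {F : Finset (Finset (Fin n) × Finset (Fin n))} (hF : ∀ p ∈ F, Flippable le p.1 p.2)
    {k : ℝ} (hk : ∀ p ∈ F, k ≤ #(p.1 ∪ p.2)ᶜ) : #F * (2 : ℝ) ^ k ≤ 2 ^ (n : ℝ) := by
  have hterm : ∀ p ∈ F, (2 : ℝ) ^ k ≤ 2 ^ #(p.1 ∪ p.2)ᶜ := fun p hp => by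
    rw [← Real.rpow_natCast]
    exact Real.rpow_le_rpow_of_exponent_le one_le_two (hk p hp)
  calc #F * (2 : ℝ) ^ k ≤ ∑ p ∈ F, (2 : ℝ) ^ #(p.1 ∪ p.2)ᶜ := by
        simpa only [nsmul_eq_mul] using card_nsmul_le_sum F _ _ hterm
    _ ≤ 2 ^ (n : ℝ) := by
        rw [Real.rpow_natCast]
        exact_mod_cast sum_two_pow_card_compl_le h hF

end Pairs

section Entropy

theorem Hb_eq_binEntropy_div_log_two (x : ℝ) : Hb x = Real.binEntropy x / Real.log 2 := by
  simp only [Hb, Real.binEntropy, Real.logb, Real.log_inv]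
  ring

theorem two_rpow_Hb_mul (x y : ℝ) : (2 : ℝ) ^ (Hb x * y) = Real.exp (Real.binEntropy x * y) := by
  rw [Real.rpow_def_of_pos two_pos, Hb_eq_binEntropy_div_log_two]
  field_simp

theorem Hb_strictMonoOn : StrictMonoOn Hb (Set.Icc 0 2⁻¹) := fun x hx y hy hxy => by
  rw [Hb_eq_binEntropy_div_log_two, Hb_eq_binEntropy_div_log_two]
  exact div_lt_div_of_pos_right (Real.binEntropy_strictMonoOn hx hy hxy) (Real.log_pos one_lt_two)

theorem exp_neg_binEntropy_mul_le {p : ℝ} (hp0 : 0 < p) (hp : p ≤ 1 / 2) {k n : ℕ} (hkn : k ≤ n)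
    (hk : k ≤ p * n) : Real.exp (-(Real.binEntropy p * n)) ≤ p ^ k * (1 - p) ^ (n - k) := by
  have hq0 : 0 < 1 - p := by linarith
  have hlog : Real.log p ≤ Real.log (1 - p) := Real.log_le_log hp0 (by linarith)
  rw [← Real.le_log_iff_exp_le (by positivity), Real.log_mul (by positivity) (by positivity),
    Real.log_pow, Real.log_pow, Nat.cast_sub hkn]
  calc -(Real.binEntropy p * n)
      = k * Real.log p + (n - k) * Real.log (1 - p)
        - (p * n - k) * (Real.log (1 - p) - Real.log p) := by
        simp only [Real.binEntropy, Real.log_inv]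
        ring
    _ ≤ k * Real.log p + (n - k) * Real.log (1 - p) :=
        sub_le_self _ (mul_nonneg (sub_nonneg.2 hk) (sub_nonneg.2 hlog))

theorem card_le_exp_binEntropy_mul_card {α : Type*} [Fintype α] {p : ℝ} (hp0 : 0 < p)
    (hp : p ≤ 1 / 2) {G : Finset (Finset α)} (hG : ∀ T ∈ G, #T ≤ p * Fintype.card α) :
    #G ≤ Real.exp (Real.binEntropy p * Fintype.card α) := by
  -- `p ^ #T * (1 - p) ^ (card α - #T)` is the probability of `T` when each element is included
  -- independently with probability `p`.
  have hq0 : 0 < 1 - p := by linarith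
  have htotal : #G * Real.exp (-(Real.binEntropy p * Fintype.card α)) ≤ 1 :=
    calc #G * Real.exp (-(Real.binEntropy p * Fintype.card α))
        ≤ ∑ T ∈ G, p ^ #T * (1 - p) ^ (Fintype.card α - #T) := by
          rw [← nsmul_eq_mul]
          exact card_nsmul_le_sum G _ _ fun T hT =>
            exp_neg_binEntropy_mul_le hp0 hp T.card_le_univ (hG T hT)
      _ ≤ ∑ T, p ^ #T * (1 - p) ^ (Fintype.card α - #T) :=
          sum_le_univ_sum_of_nonneg fun T => by positivity
      _ = 1 := by rw [Fintype.sum_pow_mul_eq_add_pow, add_sub_cancel, one_pow]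
  rwa [Real.exp_neg, ← div_eq_mul_inv, div_le_one (Real.exp_pos _)] at htotal

end Entropy

section Bound

variable {n : ℕ} {le : Finset (Fin n) → Finset (Fin n) → Prop} {lam : ℝ}
  {F : Finset (Finset (Fin n) × Finset (Fin n))}

theorem card_le_two_rpow_of_card_compl_le (h : IsDeFinettiOrder le) (hl0 : 0 < lam)
    (hl1 : lam ≤ 1 / 2) (hF : ∀ p ∈ F, Critical le p.1 p.2)
    (hsmall : ∀ p ∈ F, #(p.1 ∪ p.2)ᶜ ≤ lam * n) : #F ≤ (2 : ℝ) ^ (Hb lam * n) := by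
  have hinj : Set.InjOn (fun p : Finset (Fin n) × Finset (Fin n) => (p.1 ∪ p.2)ᶜ) F :=
    compl_injective.comp_injOn ((injOn_union_critical h).mono hF)
  rw [← card_image_of_injOn hinj, two_rpow_Hb_mul]
  simpa only [Fintype.card_fin] using card_le_exp_binEntropy_mul_card hl0 hl1
    (G := F.image fun p => (p.1 ∪ p.2)ᶜ)
    (by simpa only [forall_mem_image, Fintype.card_fin] using hsmall)

theorem card_le_two_rpow_of_le_card_compl (h : IsDeFinettiOrder le) (hlam : 1 ≤ lam + Hb lam)
    (hF : ∀ p ∈ F, Flippable le p.1 p.2) (hlarge : ∀ p ∈ F, lam * n ≤ #(p.1 ∪ p.2)ᶜ) :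
    #F ≤ (2 : ℝ) ^ (Hb lam * n) := by
  refine le_of_mul_le_mul_right ?_ (Real.rpow_pos_of_pos two_pos (lam * n))
  calc #F * (2 : ℝ) ^ (lam * n) ≤ 2 ^ (n : ℝ) := card_mul_two_rpow_le_of_le_card_compl h hF hlarge
    _ ≤ 2 ^ (Hb lam * n + lam * n) := by
        refine Real.rpow_le_rpow_of_exponent_le one_le_two ?_
        rw [← add_mul, add_comm]
        exact le_mul_of_one_le_left n.cast_nonneg hlam
    _ = 2 ^ (Hb lam * n) * 2 ^ (lam * n) := Real.rpow_add two_pos _ _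

theorem ncard_flippablePairs_le (h : IsDeFinettiOrder le) (hl0 : 0 < lam) (hl1 : lam ≤ 1 / 2)
    (hlam : 1 ≤ lam + Hb lam) :
    ((FlippablePairs le).ncard : ℝ) ≤ 2 * (2 : ℝ) ^ (Hb lam * n) := by
  obtain ⟨F, hF⟩ := (FlippablePairs le).toFinite.exists_finset_coe
  have hflip : ∀ p ∈ F, Flippable le p.1 p.2 := fun p hp => hF.subset hp
  rw [← hF, Set.ncard_coe_finset,
    ← card_filter_add_card_filter_not (fun p => (#(p.1 ∪ p.2)ᶜ : ℝ) ≤ lam * n), Nat.cast_add,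
    two_mul]
  refine add_le_add
    (card_le_two_rpow_of_card_compl_le h hl0 hl1 (fun p hp => ?_) fun p hp => ?_)
    (card_le_two_rpow_of_le_card_compl h hlam (fun p hp => ?_) fun p hp => ?_)
  · exact (hflip p (mem_filter.1 hp).1).1
  · exact (mem_filter.1 hp).2
  · exact hflip p (mem_filter.1 hp).1
  · exact (not_le.1 (mem_filter.1 hp).2).le

end Bound

theorem eventually_two_mul_two_rpow_le {a b : ℝ} (hab : a < b) :
    ∀ᶠ n : ℕ in Filter.atTop, 2 * (2 : ℝ) ^ (a * n) ≤ 2 ^ (b * n) := by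
  have hgap : ∀ᶠ n : ℕ in Filter.atTop, 1 ≤ (b - a) * n :=
    (tendsto_natCast_atTop_atTop.const_mul_atTop (sub_pos.2 hab)).eventually_ge_atTop 1
  filter_upwards [hgap] with n hn
  calc 2 * (2 : ℝ) ^ (a * n) = 2 ^ (1 + a * n) := by rw [Real.rpow_add two_pos, Real.rpow_one]
    _ ≤ 2 ^ (b * n) := Real.rpow_le_rpow_of_exponent_le one_le_two (by linarith)

theorem stmt15_general {lam : ℝ} (hl0 : 0 < lam) (hl1 : lam ≤ 1 / 2) (hlam : 1 ≤ lam + Hb lam)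
    {b : ℝ} (hb : Hb lam < b) :
    ∃ N : ℕ, ∀ n : ℕ, N ≤ n →
      ∀ le : Finset (Fin n) → Finset (Fin n) → Prop, IsDeFinettiOrder le →
        ((FlippablePairs le).ncard : ℝ) ≤ (2 : ℝ) ^ (b * n) := by
  obtain ⟨N, hN⟩ := Filter.eventually_atTop.1 (eventually_two_mul_two_rpow_le hb)
  exact ⟨N, fun n hn le h => (ncard_flippablePairs_le h hl0 hl1 hlam).trans (hN n hn)⟩

/-- Let `λ ∈ (0, 1/2)` solve `λ + H(λ) = 1`. For every `c` with `λ < c < 1/2`,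
for all sufficiently large `n`, every comparative probability order on `[n]`
has at most `2^(H(c)·n)` flippable pairs. -/
theorem stmt15 (lam : ℝ) (hl0 : 0 < lam) (hl1 : lam < 1 / 2)
    (hlam : lam + Hb lam = 1) (c : ℝ) (hc1 : lam < c) (hc2 : c < 1 / 2) :
    ∃ N : ℕ, ∀ n : ℕ, N ≤ n →
      ∀ le : Finset (Fin n) → Finset (Fin n) → Prop, IsCPO le →
        ((FlippablePairs le).ncard : ℝ) ≤ (2 : ℝ) ^ (Hb c * n) := by
  have hH : Hb lam < Hb c := Hb_strictMonoOn ⟨hl0.le, by linarith⟩ ⟨by linarith, by linarith⟩ hc1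
  obtain ⟨N, hN⟩ := stmt15_general hl0 hl1.le hlam.ge hH
  exact ⟨N, fun n hn le h => hN n hn le h.isDeFinettiOrder⟩
end

section
/- For every n ≥ 102, every comparative probability order on [n] has at most ∑_{i=0}^{⌊n/4⌋} C(n,i) flippable pairs, and this quantity is at most 2^{H(1/4)·n} < 1.7548ⁿ, where H(x) = −x·log₂ x − (1−x)·log₂(1−x) is the binary entropy function and C(n,i) is the binomial coefficient. -/
open Finset

/-!
Let `(A, B)` be flippable. Every `X` with `A ⊆ X ⊆ Bᶜ` has the immediate successor
`X ∆ (A ∪ B)`, so `X` determines `A ∪ B`, and with it `A = X ∩ (A ∪ B)` and `B = (A ∪ B) \ X`.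
The intervals `[A, Bᶜ]`, of size `2 ^ #(A ∪ B)ᶜ`, are therefore disjoint, and at most `2 ^ (n - q)`
flippable pairs satisfy `q ≤ #(A ∪ B)ᶜ`.

The remaining pairs are counted by their supports: complementation in a fixed `S` reverses the
order, so `A ≺ A' ≺ S \ A' ≺ S \ A` is impossible when `(A, S \ A)` is critical, and a critical pair
is determined by `A ∪ B`. Hence at most `∑ i < q, n.choose i` flippable pairs have `#(A ∪ B)ᶜ < q`.

For `q = n / 4` and `n` large, `2 ^ (n - q) ≤ n.choose q`. The entropy bound is obtained by keeping
the terms `i ≤ p * n` of the binomial expansion of `(p + (1 - p)) ^ n = 1`, at `p = 1 / 4`.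
-/

open scoped symmDiff

section ComparativeProbability

variable {n : ℕ} {le : Finset (Fin n) → Finset (Fin n) → Prop} {A B C X Y Z : Finset (Fin n)}

/-- `Y` is the immediate successor of `X`; the analogue of `X ⋖ Y` for an order that is not the
instance order (inclusion) on `Finset (Fin n)`. -/
def CpCovBy (le : Finset (Fin n) → Finset (Fin n) → Prop) (X Y : Finset (Fin n)) : Prop :=
  cpLT le X Y ∧ ¬ ∃ C, cpLT le X C ∧ cpLT le C Y

namespace IsCPO

theorem total (h : IsCPO le) (A B : Finset (Fin n)) : le A B ∨ le B A :=
  h.1 A B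

theorem antisymm (h : IsCPO le) (hAB : le A B) (hBA : le B A) : A = B :=
  h.2.1 A B hAB hBA

theorem trans (h : IsCPO le) (hAB : le A B) (hBC : le B C) : le A C :=
  h.2.2.1 A B C hAB hBC

theorem le_iff_union_le_union (h : IsCPO le) (hC : Disjoint (A ∪ B) C) :
    le A B ↔ le (A ∪ C) (B ∪ C) :=
  h.2.2.2.2 A B C hC

theorem lt_trichotomy (h : IsCPO le) (A B : Finset (Fin n)) :
    cpLT le A B ∨ A = B ∨ cpLT le B A := by
  by_cases hAB : A = B
  · exact .inr (.inl hAB)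
  · exact (h.total A B).imp (⟨·, hAB⟩) fun hBA ↦ .inr ⟨hBA, Ne.symm hAB⟩

theorem lt_of_lt_of_le (h : IsCPO le) (hAB : cpLT le A B) (hBC : le B C) : cpLT le A C := by
  refine ⟨h.trans hAB.1 hBC, ?_⟩
  rintro rfl
  exact hAB.2 (h.antisymm hAB.1 hBC)

theorem cpCovBy_unique (h : IsCPO le) (hY : CpCovBy le X Y) (hZ : CpCovBy le X Z) : Y = Z := by
  rcases h.lt_trichotomy Y Z with hYZ | hYZ | hZY
  · exact absurd ⟨Y, hY.1, hYZ⟩ hZ.2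
  · exact hYZ
  · exact absurd ⟨Z, hZ.1, hZY⟩ hY.2

theorem le_iff_sdiff_le_sdiff (h : IsCPO le) : le A B ↔ le (A \ B) (B \ A) := by
  have hdisj : Disjoint (A \ B ∪ B \ A) (A ∩ B) := disjoint_symmDiff_inf A B
  rw [h.le_iff_union_le_union hdisj, sdiff_union_inter, inter_comm, sdiff_union_inter]

theorem sdiff_le_sdiff_iff (h : IsCPO le) {S : Finset (Fin n)} (hA : A ⊆ S) (hB : B ⊆ S) :
    le (S \ B) (S \ A) ↔ le A B := by
  rw [h.le_iff_sdiff_le_sdiff, h.le_iff_sdiff_le_sdiff (A := A),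
    sdiff_sdiff_sdiff_cancel_left hA, sdiff_sdiff_sdiff_cancel_left hB]

theorem not_lt_of_critical_of_union_eq (h : IsCPO le) {A' B' : Finset (Fin n)}
    (hAB : Critical le A B) (hAB' : Critical le A' B') (hunion : A ∪ B = A' ∪ B') :
    ¬ cpLT le A A' := by
  intro hlt
  obtain ⟨hdisj, -, hgap⟩ := hAB
  obtain ⟨hdisj', hlt', -⟩ := hAB'
  have hle : le B' B := by
    have hdual := (h.sdiff_le_sdiff_iff subset_union_left
      (hunion ▸ subset_union_left : A' ⊆ A ∪ B)).2 hlt.1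
    rwa [union_sdiff_cancel_left hdisj, hunion, union_sdiff_cancel_left hdisj'] at hdual
  exact hgap ⟨A', hlt, h.lt_of_lt_of_le hlt' hle⟩

theorem injOn_union_critical (h : IsCPO le) :
    Set.InjOn (fun p ↦ p.1 ∪ p.2) {p : Finset (Fin n) × Finset (Fin n) | Critical le p.1 p.2} := by
  rintro ⟨A, B⟩ (hAB : Critical le A B) ⟨A', B'⟩ (hAB' : Critical le A' B')
    (hunion : A ∪ B = A' ∪ B')
  have hA : A = A' := by
    rcases h.lt_trichotomy A A' with hlt | heq | hgt
    · exact absurd hlt (h.not_lt_of_critical_of_union_eq hAB hAB' hunion)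
    · exact heq
    · exact absurd hgt (h.not_lt_of_critical_of_union_eq hAB' hAB hunion.symm)
  have hB : B = B' := by
    rw [← union_sdiff_cancel_left hAB.1, hunion, hA, union_sdiff_cancel_left hAB'.1]
  rw [hA, hB]

theorem cpCovBy_symmDiff_of_flippable (h : IsCPO le) (hAB : Flippable le A B)
    (hAX : A ⊆ X) (hXB : Disjoint X B) : CpCovBy le X (X ∆ (A ∪ B)) := by
  obtain ⟨⟨-, hlt, -⟩, hgap⟩ := hAB
  have hdisj : Disjoint (X \ A) (A ∪ B) :=
    disjoint_union_right.2 ⟨sdiff_disjoint, hXB.mono_left sdiff_subset⟩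
  have hsource : A ∪ X \ A = X := union_sdiff_of_subset hAX
  have htarget : B ∪ X \ A = X ∆ (A ∪ B) := by
    ext x
    have := @hAX x
    have : x ∈ X → x ∉ B := fun hx ↦ disjoint_left.1 hXB hx
    simp only [mem_union, mem_sdiff, mem_symmDiff]
    tauto
  have hne : A ∪ X \ A ≠ B ∪ X \ A := by
    intro heq
    rw [disjoint_union_right] at hdisj
    apply hlt.2
    rw [← union_sdiff_cancel_right hdisj.1.symm, heq, union_sdiff_cancel_right hdisj.2.symm]
  have hcov : CpCovBy le (A ∪ X \ A) (B ∪ X \ A) :=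
    ⟨⟨(h.le_iff_union_le_union hdisj.symm).1 hlt.1, hne⟩, hgap _ hdisj⟩
  rwa [hsource, htarget] at hcov

theorem pairwiseDisjoint_Icc_flippablePairs (h : IsCPO le) :
    (FlippablePairs le).PairwiseDisjoint fun p ↦ Icc p.1 p.2ᶜ := by
  have recover {A B X : Finset (Fin n)} (hAX : A ⊆ X) (hXB : Disjoint X B) :
      (X ∩ (A ∪ B), (A ∪ B) \ X) = (A, B) := by
    rw [inter_union_distrib_left, inter_eq_right.2 hAX, disjoint_iff_inter_eq_empty.1 hXB,
      union_empty, union_sdiff_distrib, sdiff_eq_empty_iff_subset.2 hAX, empty_union,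
      hXB.symm.sdiff_eq_left]
  rintro ⟨A, B⟩ hAB ⟨A', B'⟩ hAB' hne
  refine disjoint_left.2 fun X hX hX' ↦ hne ?_
  simp only [mem_Icc, subset_compl_iff_disjoint_right] at hX hX'
  have hunion : A ∪ B = A' ∪ B' := symmDiff_right_injective X <|
    h.cpCovBy_unique (h.cpCovBy_symmDiff_of_flippable hAB hX.1 hX.2)
      (h.cpCovBy_symmDiff_of_flippable hAB' hX'.1 hX'.2)
  rw [← recover hX.1 hX.2, hunion, recover hX'.1 hX'.2]

end IsCPO

theorem card_Icc_compl_of_disjoint (hAB : Disjoint A B) : #(Icc A Bᶜ) = 2 ^ #(A ∪ B)ᶜ := by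
  rw [card_Icc_finset (subset_compl_iff_disjoint_right.2 hAB), card_compl, card_compl,
    card_union_of_disjoint hAB, Nat.sub_sub, add_comm #A]

theorem card_filter_card_lt (α : Type*) [Fintype α] (q : ℕ) :
    #{S : Finset α | #S < q} = ∑ i ∈ range q, (Fintype.card α).choose i := by
  rw [card_eq_sum_card_fiberwise (t := range q) (f := card) (by simp [Set.MapsTo])]
  refine sum_congr rfl fun i hi ↦ ?_
  rw [← card_univ, ← card_powersetCard, filter_filter, powersetCard_eq_filter, powerset_univ]
  congr! 2 with S
  grind

namespace IsCPO

variable {F : Finset (Finset (Fin n) × Finset (Fin n))} {q : ℕ}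

theorem sum_two_pow_card_compl_le (h : IsCPO le) (hF : ∀ p ∈ F, Flippable le p.1 p.2) :
    ∑ p ∈ F, 2 ^ #(p.1 ∪ p.2)ᶜ ≤ 2 ^ n := by
  calc ∑ p ∈ F, 2 ^ #(p.1 ∪ p.2)ᶜ
      = ∑ p ∈ F, #(Icc p.1 p.2ᶜ) :=
        sum_congr rfl fun p hp ↦ (card_Icc_compl_of_disjoint (hF p hp).1.1).symm
    _ = #(F.biUnion fun p ↦ Icc p.1 p.2ᶜ) :=
        (card_biUnion (h.pairwiseDisjoint_Icc_flippablePairs.subset hF)).symm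
    _ ≤ Fintype.card (Finset (Fin n)) := card_le_univ _
    _ = 2 ^ n := by rw [Fintype.card_finset, Fintype.card_fin]

theorem card_le_two_pow_of_le_card_compl (h : IsCPO le) (hF : ∀ p ∈ F, Flippable le p.1 p.2)
    (hFq : ∀ p ∈ F, q ≤ #(p.1 ∪ p.2)ᶜ) (hqn : q ≤ n) : #F ≤ 2 ^ (n - q) := by
  have hmul : #F * 2 ^ q ≤ 2 ^ n :=
    (card_nsmul_le_sum F _ _ fun p hp ↦ Nat.pow_le_pow_right two_pos (hFq p hp)).trans
      (h.sum_two_pow_card_compl_le hF)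
  rwa [← Nat.pow_div hqn two_pos, Nat.le_div_iff_mul_le (by positivity)]

theorem card_le_sum_choose_of_card_compl_lt (h : IsCPO le) (hF : ∀ p ∈ F, Critical le p.1 p.2)
    (hFq : ∀ p ∈ F, #(p.1 ∪ p.2)ᶜ < q) : #F ≤ ∑ i ∈ range q, n.choose i := by
  calc #F ≤ #{S : Finset (Fin n) | #S < q} :=
        card_le_card_of_injOn (fun p ↦ (p.1 ∪ p.2)ᶜ) (fun p hp ↦ by simpa using hFq p hp)
          (compl_injective.comp_injOn (h.injOn_union_critical.mono hF))
    _ = ∑ i ∈ range q, n.choose i := by rw [card_filter_card_lt, Fintype.card_fin]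

theorem ncard_flippablePairs_le (h : IsCPO le) (hqn : q ≤ n) :
    (FlippablePairs le).ncard ≤ ∑ i ∈ range q, n.choose i + 2 ^ (n - q) := by
  classical
  rw [Set.ncard_eq_toFinset_card',
    ← card_filter_add_card_filter_not (fun p ↦ #(p.1 ∪ p.2)ᶜ < q)]
  have hflip : ∀ p ∈ (FlippablePairs le).toFinset, p ∈ FlippablePairs le :=
    fun _ ↦ Set.mem_toFinset.1
  refine add_le_add (h.card_le_sum_choose_of_card_compl_lt ?_ ?_)
    (h.card_le_two_pow_of_le_card_compl ?_ ?_ hqn)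
  · exact fun p hp ↦ (hflip p (mem_filter.1 hp).1).1
  · exact fun p hp ↦ (mem_filter.1 hp).2
  · exact fun p hp ↦ hflip p (mem_filter.1 hp).1
  · exact fun p hp ↦ not_lt.1 (mem_filter.1 hp).2

end IsCPO

end ComparativeProbability

section BinomialCoefficients

theorem mul_choose_le_mul_choose_succ {n k a b : ℕ} (hkn : k ≤ n)
    (hab : a * (n + 1 - k) ≤ b * (n + 1)) : a * n.choose k ≤ b * (n + 1).choose k := by
  refine Nat.le_of_mul_le_mul_right ?_ (show 0 < n + 1 - k by lia)
  calc a * n.choose k * (n + 1 - k)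
      = a * (n + 1 - k) * n.choose k := by ring
    _ ≤ b * (n + 1) * n.choose k := Nat.mul_le_mul_right _ hab
    _ = b * (n.choose k * (n + 1)) := by ring
    _ = b * (n + 1).choose k * (n + 1 - k) := by rw [Nat.choose_mul_succ_eq, mul_assoc]

theorem mul_choose_le_choose_succ_succ {n k a : ℕ} (ha : a * (k + 1) ≤ n + 1) :
    a * n.choose k ≤ (n + 1).choose (k + 1) := by
  refine Nat.le_of_mul_le_mul_right ?_ (Nat.succ_pos k)
  calc a * n.choose k * (k + 1)
      = a * (k + 1) * n.choose k := by ring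
    _ ≤ (n + 1) * n.choose k := Nat.mul_le_mul_right _ ha
    _ = (n + 1).choose (k + 1) * (k + 1) := Nat.add_one_mul_choose_eq n k

theorem eight_mul_choose_le_choose_add_four {n k : ℕ} (hkn : 4 * k ≤ n)
    (hnk : 2 * (n + 3) ≤ 9 * k) : 8 * n.choose k ≤ (n + 4).choose (k + 1) := by
  -- Passing from `4 * k` to `4 * k + 1` multiplies the coefficient by about `4 / 3`; the smaller
  -- ratio `9 / 7` absorbs the error terms and still gives `4 * (9 / 7) ^ 3 > 8`.
  have h1 : 9 * n.choose k ≤ 7 * (n + 1).choose k :=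
    mul_choose_le_mul_choose_succ (by lia) (by lia)
  have h2 : 9 * (n + 1).choose k ≤ 7 * (n + 2).choose k :=
    mul_choose_le_mul_choose_succ (by lia) (by lia)
  have h3 : 9 * (n + 2).choose k ≤ 7 * (n + 3).choose k :=
    mul_choose_le_mul_choose_succ (by lia) (by lia)
  have h4 : 4 * (n + 3).choose k ≤ (n + 4).choose (k + 1) :=
    mul_choose_le_choose_succ_succ (by lia)
  lia

theorem two_pow_sub_div_four_le_choose {n : ℕ} (hn : 84 ≤ n) :
    2 ^ (n - n / 4) ≤ n.choose (n / 4) := by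
  induction n using Nat.strong_induction_on with
  | _ n ih =>
    by_cases hn' : n < 88
    · interval_cases n <;> norm_num [Nat.choose]
    · obtain ⟨m, rfl⟩ : ∃ m, n = m + 4 := ⟨n - 4, by lia⟩
      calc 2 ^ (m + 4 - (m + 4) / 4)
          = 8 * 2 ^ (m - m / 4) := by
            rw [show m + 4 - (m + 4) / 4 = 3 + (m - m / 4) by lia, pow_add]
            norm_num
        _ ≤ 8 * m.choose (m / 4) := Nat.mul_le_mul_left 8 (ih m (by lia) (by lia))
        _ ≤ (m + 4).choose (m / 4 + 1) :=
            eight_mul_choose_le_choose_add_four (by lia) (by lia)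
        _ = (m + 4).choose ((m + 4) / 4) := by rw [Nat.add_div_right m four_pos]

end BinomialCoefficients

section Entropy

variable {p : ℝ}

theorem two_rpow_neg_Hb (hp₀ : 0 < p) (hp₁ : p < 1) :
    (2 : ℝ) ^ (-Hb p) = p ^ p * (1 - p) ^ (1 - p) := by
  have hexp : -Hb p = Real.logb 2 p * p + Real.logb 2 (1 - p) * (1 - p) := by
    unfold Hb
    ring
  rw [hexp, Real.rpow_add two_pos, Real.rpow_mul zero_le_two, Real.rpow_mul zero_le_two,
    Real.rpow_logb two_pos (by norm_num) hp₀, Real.rpow_logb two_pos (by norm_num) (sub_pos.2 hp₁)]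

theorem two_rpow_neg_Hb_mul_le {n i : ℕ} (hp₀ : 0 < p) (hp : p ≤ 1 / 2) (hi : (i : ℝ) ≤ p * n) :
    (2 : ℝ) ^ (-Hb p * n) ≤ p ^ i * (1 - p) ^ (n - i) := by
  have hq₀ : 0 < 1 - p := by linarith
  have hin : i ≤ n := by
    exact_mod_cast hi.trans (mul_le_of_le_one_left n.cast_nonneg (by linarith))
  calc (2 : ℝ) ^ (-Hb p * n)
      = p ^ (p * n) * (1 - p) ^ ((1 - p) * n) := by
        rw [Real.rpow_mul zero_le_two, two_rpow_neg_Hb hp₀ (by linarith),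
          Real.mul_rpow (by positivity) (by positivity), ← Real.rpow_mul hp₀.le,
          ← Real.rpow_mul hq₀.le]
    _ = p ^ i * p ^ (p * n - i) * (1 - p) ^ ((1 - p) * n) := by
        rw [← Real.rpow_natCast p i, ← Real.rpow_add hp₀, add_sub_cancel]
    _ ≤ p ^ i * (1 - p) ^ (p * n - i) * (1 - p) ^ ((1 - p) * n) := by
        have := Real.rpow_le_rpow hp₀.le (by linarith : p ≤ 1 - p) (sub_nonneg.2 hi)
        gcongr
    _ = p ^ i * (1 - p) ^ (n - i) := by
        rw [mul_assoc, ← Real.rpow_add hq₀, ← Real.rpow_natCast (1 - p), Nat.cast_sub hin]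
        ring_nf

theorem sum_range_choose_le_two_rpow_Hb {n k : ℕ} (hp₀ : 0 < p) (hp : p ≤ 1 / 2)
    (hk : (k : ℝ) ≤ p * n) :
    ((∑ i ∈ range (k + 1), n.choose i : ℕ) : ℝ) ≤ (2 : ℝ) ^ (Hb p * n) := by
  have hq₀ : 0 < 1 - p := by linarith
  have hkn : k ≤ n := by
    exact_mod_cast hk.trans (mul_le_of_le_one_left n.cast_nonneg (by linarith))
  have hsum : (∑ i ∈ range (k + 1), n.choose i : ℕ) * (2 : ℝ) ^ (-Hb p * n) ≤ 1 := by
    calc (∑ i ∈ range (k + 1), n.choose i : ℕ) * (2 : ℝ) ^ (-Hb p * n)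
        = ∑ i ∈ range (k + 1), (2 : ℝ) ^ (-Hb p * n) * n.choose i := by
          rw [Nat.cast_sum, mul_comm, mul_sum]
      _ ≤ ∑ i ∈ range (k + 1), p ^ i * (1 - p) ^ (n - i) * n.choose i := by
          gcongr with i hi
          have hik : (i : ℝ) ≤ k := by exact_mod_cast Nat.lt_succ_iff.1 (mem_range.1 hi)
          exact two_rpow_neg_Hb_mul_le hp₀ hp (hik.trans hk)
      _ ≤ ∑ i ∈ range (n + 1), p ^ i * (1 - p) ^ (n - i) * n.choose i := by
          gcongr
      _ = 1 := by rw [← add_pow, add_sub_cancel, one_pow]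
  rwa [neg_mul, Real.rpow_neg zero_le_two, ← div_eq_mul_inv, div_le_one (by positivity)] at hsum

theorem two_rpow_Hb_one_div_four_lt : (2 : ℝ) ^ Hb (1 / 4) < 1.7548 := by
  have hpow : ((2 : ℝ) ^ (-Hb (1 / 4))) ^ 4 = 27 / 256 := by
    rw [two_rpow_neg_Hb (by norm_num) (by norm_num), mul_pow, ← Real.rpow_mul_natCast (by norm_num),
      ← Real.rpow_mul_natCast (by norm_num)]
    norm_num
  rw [Real.rpow_neg zero_le_two, inv_pow] at hpow
  refine lt_of_pow_lt_pow_left₀ 4 (by norm_num) ?_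
  rw [inv_eq_iff_eq_inv.1 hpow]
  norm_num

end Entropy

theorem IsCPO.ncard_flippablePairs_le_sum_choose {n : ℕ}
    {le : Finset (Fin n) → Finset (Fin n) → Prop} (h : IsCPO le) (hn : 84 ≤ n) :
    (FlippablePairs le).ncard ≤ ∑ i ∈ range (n / 4 + 1), n.choose i := by
  rw [sum_range_succ]
  exact (h.ncard_flippablePairs_le (Nat.div_le_self n 4)).trans
    (Nat.add_le_add_left (two_pow_sub_div_four_le_choose hn) _)

/-- For `n ≥ 102`, every comparative probability order on `[n]` has at most
`∑_{i=0}^{⌊n/4⌋} C(n,i)` flippable pairs, and this quantity is at most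
`2^(H(1/4)·n) < 1.7548^n`. -/
theorem stmt16 {n : ℕ} (hn : 102 ≤ n)
    (le : Finset (Fin n) → Finset (Fin n) → Prop) (h : IsCPO le) :
    (FlippablePairs le).ncard ≤ ∑ i ∈ Finset.range (n / 4 + 1), n.choose i ∧
    ((∑ i ∈ Finset.range (n / 4 + 1), n.choose i : ℕ) : ℝ) ≤
      (2 : ℝ) ^ (Hb (1 / 4) * n) ∧
    (2 : ℝ) ^ (Hb (1 / 4) * n) < (1.7548 : ℝ) ^ n := by
  have hdiv : ((n / 4 : ℕ) : ℝ) ≤ 1 / 4 * n := by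
    simpa [div_eq_inv_mul] using (Nat.cast_div_le : ((n / 4 : ℕ) : ℝ) ≤ n / (4 : ℕ))
  refine ⟨h.ncard_flippablePairs_le_sum_choose (by lia),
    sum_range_choose_le_two_rpow_Hb (by norm_num) (by norm_num) hdiv, ?_⟩
  rw [Real.rpow_mul_natCast zero_le_two]
  exact pow_lt_pow_left₀ two_rpow_Hb_one_div_four_lt (by positivity) (by lia)
end
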